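/- arXiv:math/0612775 — 2 statements merged into one kernel-verified Lean document; each statement's English description precedes it below -/
import Mathlib

section
/- Let f ∈ L¹(ℝ) with Fourier transform f̃(λ) = ∫_ℝ f(t) e^{-iλt} dt. If ∫_ℝ ∫_ℝ |f(x)| |f̃(y)| e^{|xy|} dx dy < ∞, then f = 0 almost everywhere. -/
open MeasureTheory

/-!
This is Hedenmalm's argument. If `f` is not a.e. zero, the hypothesis makes `𝓕 f` integrable, so
that `f = 𝓕⁻ (𝓕 f)` a.e. The correlation `Φ r = ∫ x, ⟪f x, f (r • x)⟫` of `f` with its dilates then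
equals `∫ x, ∫ y, exp (2πi r⟪x, y⟫) * ⟪f x, 𝓕 f y⟫`, and the exponential weight in the hypothesis is
exactly what extends it to a bounded holomorphic function on the strip `|Im z| < 1`. Substituting
`x ↦ r • x` gives `conj (Φ r⁻¹) = |r| ^ n * Φ r` for real `r`, where `n` is the dimension. By
analytic continuation, `S z = (1 + z ^ 2) ^ n * Φ z ^ 2` is real on the unit circle away from `± i`;
since `Φ` is bounded, `S` extends continuously to the closed disc with `S (± i) = 0`. So `S` is
constant, hence zero, and `0 = Φ 1 = ∫ x, ‖f x‖ ^ 2`.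
-/

section ExponentialIntegrals

open Complex Set

/-- The open strip `|Im z| < 1`, on which `exp (I * z * x)` is dominated by `exp |x|` for all
real `x`. -/
def unitStrip : Set ℂ := {z | |z.im| < 1}

lemma norm_cexp_I_mul_mul_ofReal_le (z : ℂ) (x : ℝ) :
    ‖cexp (I * z * x)‖ ≤ Real.exp (|z.im| * |x|) := by
  rw [norm_exp, ← abs_mul]
  simpa using neg_le_abs (z.im * x)

lemma norm_cexp_I_mul_mul_ofReal_mul_le {z : ℂ} (hz : z ∈ unitStrip) (x : ℝ) (c : ℂ) :
    ‖cexp (I * z * x) * c‖ ≤ ‖c‖ * Real.exp |x| := by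
  rw [norm_mul, mul_comm]
  gcongr
  refine (norm_cexp_I_mul_mul_ofReal_le z x).trans (Real.exp_le_exp.2 ?_)
  exact mul_le_of_le_one_left (abs_nonneg x) (le_of_lt hz)

lemma abs_mul_exp_mul_abs_le {δ : ℝ} (hδ : 0 < δ) (x : ℝ) :
    |x| * Real.exp ((1 - δ) * |x|) ≤ δ⁻¹ * Real.exp |x| := by
  have hlin : δ * |x| ≤ Real.exp (δ * |x|) := by linarith [Real.add_one_le_exp (δ * |x|)]
  calc |x| * Real.exp ((1 - δ) * |x|)
      = δ⁻¹ * (δ * |x| * Real.exp ((1 - δ) * |x|)) := by field_simp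
    _ ≤ δ⁻¹ * (Real.exp (δ * |x|) * Real.exp ((1 - δ) * |x|)) := by gcongr
    _ = δ⁻¹ * Real.exp |x| := by rw [← Real.exp_add]; ring_nf

variable {α : Type*} [MeasurableSpace α] {μ : Measure α} {X : α → ℝ} {c : α → ℂ}

lemma norm_integral_cexp_mul_le (hc : Integrable (fun a ↦ ‖c a‖ * Real.exp |X a|) μ) {z : ℂ}
    (hz : z ∈ unitStrip) :
    ‖∫ a, cexp (I * z * X a) * c a ∂μ‖ ≤ ∫ a, ‖c a‖ * Real.exp |X a| ∂μ :=
  norm_integral_le_of_norm_le hc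
    (.of_forall fun a ↦ norm_cexp_I_mul_mul_ofReal_mul_le hz (X a) (c a))

lemma differentiableOn_integral_cexp_mul (hX : AEMeasurable X μ) (hcm : AEStronglyMeasurable c μ)
    (hc : Integrable (fun a ↦ ‖c a‖ * Real.exp |X a|) μ) :
    DifferentiableOn ℂ (fun z ↦ ∫ a, cexp (I * z * X a) * c a ∂μ) unitStrip := by
  intro z₀ hz₀
  obtain ⟨δ, hδ, hz₀δ⟩ : ∃ δ > 0, |z₀.im| + δ ≤ 1 - δ :=
    ⟨(1 - |z₀.im|) / 2, half_pos (sub_pos.2 hz₀), by linarith⟩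
  have hmeas (z : ℂ) : AEStronglyMeasurable (fun a ↦ cexp (I * z * X a) * c a) μ :=
    (by fun_prop : AEMeasurable (fun a ↦ cexp (I * z * X a)) μ).aestronglyMeasurable.mul hcm
  have hint : Integrable (fun a ↦ cexp (I * z₀ * X a) * c a) μ :=
    hc.mono' (hmeas z₀) (.of_forall fun a ↦ norm_cexp_I_mul_mul_ofReal_mul_le hz₀ (X a) (c a))
  have him {z : ℂ} (hz : z ∈ Metric.ball z₀ δ) : |z.im| ≤ 1 - δ := by
    have h := (abs_im_le_norm (z - z₀)).trans (mem_ball_iff_norm.1 hz).le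
    rw [sub_im] at h
    linarith [abs_sub_abs_le_abs_sub z.im z₀.im]
  have hderiv_le (a : α) (z : ℂ) (hz : z ∈ Metric.ball z₀ δ) :
      ‖cexp (I * z * X a) * (I * X a) * c a‖ ≤ δ⁻¹ * (‖c a‖ * Real.exp |X a|) := calc
    ‖cexp (I * z * X a) * (I * X a) * c a‖ = ‖c a‖ * (|X a| * ‖cexp (I * z * X a)‖) := by
      simp only [norm_mul, norm_I, norm_real, Real.norm_eq_abs]; ring
    _ ≤ ‖c a‖ * (|X a| * Real.exp ((1 - δ) * |X a|)) := by
      gcongr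
      exact (norm_cexp_I_mul_mul_ofReal_le z _).trans (by gcongr; exact him hz)
    _ ≤ ‖c a‖ * (δ⁻¹ * Real.exp |X a|) :=
      mul_le_mul_of_nonneg_left (abs_mul_exp_mul_abs_le hδ _) (norm_nonneg _)
    _ = δ⁻¹ * (‖c a‖ * Real.exp |X a|) := by ring
  have hderiv (a : α) (z : ℂ) :
      HasDerivAt (fun z ↦ cexp (I * z * X a) * c a) (cexp (I * z * X a) * (I * X a) * c a) z := by
    simpa using ((((hasDerivAt_id z).const_mul I).mul_const (X a : ℂ)).cexp).mul_const (c a)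
  have hderiv_meas : AEStronglyMeasurable (fun a ↦ cexp (I * z₀ * X a) * (I * X a) * c a) μ :=
    AEMeasurable.aestronglyMeasurable (by fun_prop) |>.mul hcm
  exact (hasDerivAt_integral_of_dominated_loc_of_deriv_le (Metric.ball_mem_nhds z₀ hδ)
    (.of_forall hmeas) hint hderiv_meas (.of_forall hderiv_le) (hc.const_mul _)
    (.of_forall fun a z _ ↦ hderiv a z)).2.differentiableAt.differentiableWithinAt

end ExponentialIntegrals

lemma integrable_of_integrable_norm_mul_norm_mul {α β E F : Type*} [MeasurableSpace α]
    [MeasurableSpace β] {μ : Measure α} {ν : Measure β} [SFinite μ] [SFinite ν]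
    [NormedAddCommGroup E] [NormedAddCommGroup F] {f : α → E} {g : β → F} {w : α × β → ℝ}
    (hf : ¬ f =ᵐ[μ] 0) (hg : AEStronglyMeasurable g ν) (hw : ∀ p, 1 ≤ w p)
    (h : Integrable (fun p ↦ ‖f p.1‖ * ‖g p.2‖ * w p) (μ.prod ν)) : Integrable g ν := by
  obtain ⟨x, hfx, hx⟩ := ((Filter.not_eventually.1 hf).and_eventually h.prod_right_ae).exists
  have hfx_pos : 0 < ‖f x‖ := norm_pos_iff.2 hfx
  refine (hx.const_mul ‖f x‖⁻¹).mono' hg (.of_forall fun y ↦ ?_)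
  rw [mul_assoc, inv_mul_cancel_left₀ hfx_pos.ne']
  exact le_mul_of_one_le_right (norm_nonneg _) (hw (x, y))

lemma integrable_norm_inner_mul {α E : Type*} [MeasurableSpace α] {μ : Measure α}
    [NormedAddCommGroup E] [InnerProductSpace ℂ E] {u v : α → E} {w : α → ℝ}
    (hu : AEStronglyMeasurable u μ) (hv : AEStronglyMeasurable v μ)
    (hw : AEStronglyMeasurable w μ) (h : Integrable (fun a ↦ ‖u a‖ * ‖v a‖ * w a) μ) :
    Integrable (fun a ↦ ‖inner ℂ (u a) (v a)‖ * w a) μ := by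
  refine h.mono ((hu.inner hv).norm.mul hw) (.of_forall fun a ↦ ?_)
  simp only [norm_mul, norm_norm]
  gcongr
  exact norm_inner_le_norm _ _

lemma integrable_comp_smul_snd {α V E : Type*} [MeasurableSpace α] {μ : Measure α} [SFinite μ]
    [NormedAddCommGroup V] [NormedSpace ℝ V] [FiniteDimensional ℝ V] [MeasurableSpace V]
    [BorelSpace V] {ν : Measure V} [ν.IsAddHaarMeasure] [NormedAddCommGroup E] {K : α × V → E}
    (hK : Integrable K (μ.prod ν)) {r : ℝ} (hr : r ≠ 0) :
    Integrable (fun p ↦ K (p.1, r • p.2)) (μ.prod ν) := by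
  have hsmul : MeasurePreserving (r • · : V → V) ν
      (ENNReal.ofReal |(r ^ Module.finrank ℝ V)⁻¹| • ν) :=
    ⟨measurable_const_smul r, Measure.map_addHaar_smul ν hr⟩
  refine ((MeasurePreserving.id μ).prod hsmul).integrable_comp_of_integrable ?_
  rw [Measure.prod_smul_right]
  exact hK.smul_measure ENNReal.ofReal_ne_top

section ComplexAnalysis

open Complex Metric Set Filter Topology ComplexConjugate

lemma im_eq_zero_of_mem_closure_of_frontier_im_eq_zero {E : Type*} [NormedAddCommGroup E]
    [NormedSpace ℂ E] [Nontrivial E] {U : Set E} (hU : Bornology.IsBounded U) {S : E → ℂ}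
    (hS : DiffContOnCl ℂ S U) (hreal : ∀ z ∈ frontier U, (S z).im = 0) {z : E}
    (hz : z ∈ closure U) : (S z).im = 0 := by
  have im_nonneg {T : E → ℂ} (hT : DiffContOnCl ℂ T U) (hT0 : ∀ z ∈ frontier U, (T z).im = 0) :
      0 ≤ (T z).im := by
    have hexp : DiffContOnCl ℂ (fun z ↦ exp (I * T z)) U :=
      differentiable_exp.comp_diffContOnCl (hT.const_smul I)
    have hle := norm_le_of_forall_mem_frontier_norm_le (C := 1) hU hexp
      (fun w hw ↦ by simp [norm_exp, hT0 w hw]) hz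
    simpa [norm_exp] using hle
  have hneg := im_nonneg hS.neg fun w hw ↦ by simp [hreal w hw]
  exact le_antisymm (by simpa using hneg) (im_nonneg hS hreal)

lemma exists_eqOn_closure_const_of_frontier_im_eq_zero {U : Set ℂ} (hU : Bornology.IsBounded U)
    (hUo : IsOpen U) (hUc : IsConnected U) {S : ℂ → ℂ} (hS : DiffContOnCl ℂ S U)
    (hreal : ∀ z ∈ frontier U, (S z).im = 0) : ∃ c, EqOn S (fun _ ↦ c) (closure U) := by
  have him (z : ℂ) (hz : z ∈ U) : (S z).im = 0 :=
    im_eq_zero_of_mem_closure_of_frontier_im_eq_zero hU hS hreal (subset_closure hz)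
  obtain ⟨c, hc⟩ :=
    (hS.differentiableOn.analyticOnNhd hUo).eq_const_of_im_eq_const him hUo hUc
  exact ⟨c, EqOn.of_subset_closure hc hS.continuousOn continuousOn_const subset_closure subset_rfl⟩

lemma isOpen_unitStrip : IsOpen unitStrip :=
  isOpen_lt (by fun_prop) continuous_const

lemma conj_mem_unitStrip {z : ℂ} (hz : z ∈ unitStrip) : conj z ∈ unitStrip := by
  simpa [unitStrip] using hz

lemma neg_mem_unitStrip {z : ℂ} (hz : z ∈ unitStrip) : -z ∈ unitStrip := by
  simpa [unitStrip] using hz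

lemma mem_unitStrip_of_norm_le_one {z : ℂ} (hz : ‖z‖ ≤ 1) (hz' : 1 + z ^ 2 ≠ 0) :
    z ∈ unitStrip := by
  have hsq : z.re ^ 2 + z.im ^ 2 ≤ 1 := by
    rw [sq, sq, ← normSq_apply, normSq_eq_norm_sq]
    exact pow_le_one₀ (norm_nonneg z) hz
  refine lt_of_le_of_ne ((abs_im_le_norm z).trans hz) fun him ↦ hz' ?_
  have him2 : z.im ^ 2 = 1 := by rw [← sq_abs, him, one_pow]
  have hre : z.re = 0 := by nlinarith
  exact Complex.ext (by simp [sq, hre]; linarith) (by simp [sq, hre])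

/-- The connected component of `0` in the set of `w` such that both `exp w` and `exp (-w)` lie in
`unitStrip`, on which a symmetry under `z ↦ z⁻¹` can be continued from the positive reals to the
right half of the unit circle. -/
def logStrip : Set ℂ := {w | |w.im| < Real.pi / 2 ∧ Real.exp |w.re| * |Real.sin w.im| < 1}

lemma isOpen_logStrip : IsOpen logStrip :=
  (isOpen_lt (f := fun w : ℂ ↦ |w.im|) (by fun_prop) continuous_const).inter
    (isOpen_lt (f := fun w : ℂ ↦ Real.exp |w.re| * |Real.sin w.im|) (by fun_prop) continuous_const)

lemma starConvex_logStrip : StarConvex ℝ 0 logStrip := by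
  rw [starConvex_zero_iff]
  rintro w ⟨him, hexp⟩ t ht0 ht1
  have hshrink (a : ℝ) : |t * a| ≤ |a| := by
    rw [abs_mul, abs_of_nonneg ht0]
    exact mul_le_of_le_one_left (abs_nonneg a) ht1
  have hpi := Real.pi_pos
  have hsin : |Real.sin (t * w.im)| ≤ |Real.sin w.im| := by
    rw [Real.abs_sin_eq_sin_abs_of_abs_le_pi (by linarith [hshrink w.im]),
      Real.abs_sin_eq_sin_abs_of_abs_le_pi (by linarith)]
    exact Real.sin_le_sin_of_le_of_le_pi_div_two (by linarith [abs_nonneg (t * w.im)]) him.le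
      (hshrink w.im)
  simp only [logStrip, mem_ofPred_eq, real_smul, re_ofReal_mul, im_ofReal_mul]
  refine ⟨(hshrink w.im).trans_lt him, lt_of_le_of_lt ?_ hexp⟩
  exact mul_le_mul (Real.exp_le_exp.2 (hshrink w.re)) hsin (abs_nonneg _) (Real.exp_pos _).le

lemma neg_mem_logStrip {w : ℂ} (hw : w ∈ logStrip) : -w ∈ logStrip := by
  simpa [logStrip] using hw

lemma exp_mem_unitStrip {w : ℂ} (hw : w ∈ logStrip) : exp w ∈ unitStrip := by
  rw [unitStrip, mem_ofPred_eq, exp_im, abs_mul, Real.abs_exp]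
  refine lt_of_le_of_lt ?_ hw.2
  gcongr
  exact le_abs_self w.re

lemma arg_mul_I_mem_logStrip {z : ℂ} (hre : 0 < z.re) : z.arg * I ∈ logStrip := by
  have harg : |z.arg| < Real.pi / 2 := abs_arg_lt_pi_div_two_iff.2 (Or.inl hre)
  have hsin : |Real.sin z.arg| < 1 := by
    have hcos := Real.cos_pos_of_mem_Ioo (abs_lt.1 harg)
    rw [← sq_lt_one_iff_abs_lt_one]
    nlinarith [Real.sin_sq_add_cos_sq z.arg]
  exact ⟨by simpa using harg, by simpa using hsin⟩

variable {Φ : ℂ → ℂ}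

lemma conj_eq_pow_mul_of_conj_inv_eq (hΦ : DifferentiableOn ℂ Φ unitStrip) {n : ℕ}
    (hsymm : ∀ r : ℝ, 0 < r → conj (Φ (r⁻¹ : ℝ)) = r ^ n * Φ r) {z : ℂ} (hz : ‖z‖ = 1)
    (hre : 0 < z.re) : conj (Φ z) = z ^ n * Φ z := by
  have hdiff {w : ℂ} (hw : w ∈ unitStrip) : DifferentiableAt ℂ Φ w :=
    hΦ.differentiableAt (isOpen_unitStrip.mem_nhds hw)
  have hleft : DifferentiableOn ℂ (fun w ↦ conj (Φ (conj (exp (-w))))) logStrip := fun w hw ↦ by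
    have hmem := conj_mem_unitStrip (exp_mem_unitStrip (neg_mem_logStrip hw))
    have hconj : DifferentiableAt ℂ (conj ∘ Φ ∘ conj) (exp (-w)) := by
      simpa using (hdiff hmem).conj_conj
    exact (hconj.comp w (f := fun w ↦ exp (-w)) (by fun_prop)).differentiableWithinAt
  have hright : DifferentiableOn ℂ (fun w ↦ exp w ^ n * Φ (exp w)) logStrip := fun w hw ↦
    ((by fun_prop : DifferentiableAt ℂ (fun w ↦ exp w ^ n) w).mul
      ((hdiff (exp_mem_unitStrip hw)).comp w (by fun_prop))).differentiableWithinAt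
  have hreal (t : ℝ) : conj (Φ (conj (exp (-t)))) = exp t ^ n * Φ (exp t) := by
    have h := hsymm (Real.exp t) (Real.exp_pos t)
    rw [← Real.exp_neg] at h
    simpa [← exp_conj] using h
  have hfreq : ∃ᶠ w in 𝓝[≠] (0 : ℂ), conj (Φ (conj (exp (-w)))) = exp w ^ n * Φ (exp w) := by
    have htend : Tendsto ofReal (𝓝[≠] (0 : ℝ)) (𝓝[≠] (0 : ℂ)) :=
      continuous_ofReal.continuousWithinAt.tendsto_nhdsWithin fun t ht ↦ by simpa using ht
    exact htend.frequently (Eventually.of_forall hreal).frequently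
  have hzero : (0 : ℂ) ∈ logStrip := by simp [logStrip, Real.pi_pos]
  have heq := (hleft.analyticOnNhd isOpen_logStrip).eqOn_of_preconnected_of_frequently_eq
    (hright.analyticOnNhd isOpen_logStrip)
    (starConvex_logStrip.isPathConnected hzero).isConnected.isPreconnected hzero hfreq
    (arg_mul_I_mem_logStrip hre)
  have hexp : exp (z.arg * I) = z := by simpa [hz] using norm_mul_exp_arg_mul_I z
  have hconj : conj (exp (-(z.arg * I))) = z := by rw [← exp_conj]; simpa using hexp
  simpa only [hexp, hconj] using heq

/-- For `Φ` with `conj (Φ r⁻¹) = |r| ^ n * Φ r` on the reals, this combination is real on the unit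
circle; its factor `(1 + z ^ 2) ^ n` moreover makes it vanish continuously at `± I`, where `Φ` is
only known to be bounded nearby. -/
def inversionSymmetrization (Φ : ℂ → ℂ) (n : ℕ) (z : ℂ) : ℂ := (1 + z ^ 2) ^ n * Φ z ^ 2

lemma conj_inversionSymmetrization {n : ℕ} {z : ℂ} (hz : ‖z‖ = 1)
    (hΦz : conj (Φ z) ^ 2 = (z ^ n * Φ z) ^ 2) :
    conj (inversionSymmetrization Φ n z) = inversionSymmetrization Φ n z := by
  have hzc : conj z * z = 1 := by simp [conj_mul', hz]
  simp only [inversionSymmetrization, map_mul, map_pow, map_add, map_one, hΦz]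
  calc (1 + conj z ^ 2) ^ n * (z ^ n * Φ z) ^ 2
      = (z ^ 2 + (conj z * z) ^ 2) ^ n * Φ z ^ 2 := by
        rw [mul_pow, ← pow_mul, mul_comm n, pow_mul, ← mul_assoc, ← mul_pow]; ring
    _ = (1 + z ^ 2) ^ n * Φ z ^ 2 := by rw [hzc, one_pow, add_comm]

lemma inversionSymmetrization_im_eq_zero (hΦ : DifferentiableOn ℂ Φ unitStrip) {n : ℕ}
    (hsymm : ∀ r : ℝ, r ≠ 0 → conj (Φ (r⁻¹ : ℝ)) = |r| ^ n * Φ r) {z : ℂ}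
    (hz : ‖z‖ = 1) (hre : z.re ≠ 0) : (inversionSymmetrization Φ n z).im = 0 := by
  refine conj_eq_iff_im.1 (conj_inversionSymmetrization hz ?_)
  rcases hre.lt_or_gt with hneg | hpos
  · have hΦneg : DifferentiableOn ℂ (fun z ↦ Φ (-z)) unitStrip :=
      hΦ.comp differentiableOn_id.neg fun _ ↦ neg_mem_unitStrip
    have h := conj_eq_pow_mul_of_conj_inv_eq hΦneg (n := n)
      (fun r hr ↦ by simpa [abs_of_pos hr, inv_neg] using hsymm (-r) (neg_ne_zero.2 hr.ne'))
      (z := -z) (by simpa using hz) (by simpa using hneg)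
    rw [neg_neg] at h
    rw [h, mul_pow, mul_pow, pow_right_comm, neg_sq, pow_right_comm]
  · rw [conj_eq_pow_mul_of_conj_inv_eq hΦ
      (fun r hr ↦ by simpa [abs_of_pos hr] using hsymm r hr.ne') hz hpos]

lemma diffContOnCl_inversionSymmetrization (hΦ : DifferentiableOn ℂ Φ unitStrip) {M : ℝ}
    (hM : ∀ z ∈ unitStrip, ‖Φ z‖ ≤ M) {n : ℕ} (hn : n ≠ 0) :
    DiffContOnCl ℂ (inversionSymmetrization Φ n) (ball 0 1) := by
  have hdiff {z : ℂ} (hz : z ∈ unitStrip) : DifferentiableAt ℂ (inversionSymmetrization Φ n) z :=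
    (by fun_prop : DifferentiableAt ℂ (fun z : ℂ ↦ (1 + z ^ 2) ^ n) z).mul
      ((hΦ.differentiableAt (isOpen_unitStrip.mem_nhds hz)).pow 2)
  refine ⟨fun z hz ↦ (hdiff ?_).differentiableWithinAt, ?_⟩
  · exact (abs_im_le_norm z).trans_lt (mem_ball_zero_iff.1 hz)
  rw [closure_ball 0 one_ne_zero]
  intro z hz
  by_cases hz0 : 1 + z ^ 2 = 0
  · have hbound : ∀ w ∈ closedBall (0 : ℂ) 1,
        ‖inversionSymmetrization Φ n w‖ ≤ ‖1 + w ^ 2‖ ^ n * M ^ 2 := fun w hw ↦ by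
      rw [inversionSymmetrization, norm_mul, norm_pow, norm_pow]
      by_cases hw0 : 1 + w ^ 2 = 0
      · simp [hw0, hn]
      · gcongr
        exact hM w (mem_unitStrip_of_norm_le_one (mem_closedBall_zero_iff.1 hw) hw0)
    have hlim : Tendsto (fun w : ℂ ↦ ‖1 + w ^ 2‖ ^ n * M ^ 2) (𝓝[closedBall 0 1] z) (𝓝 0) := by
      have hcont : Continuous fun w : ℂ ↦ ‖1 + w ^ 2‖ ^ n * M ^ 2 := by fun_prop
      simpa [hz0, hn] using (hcont.tendsto z).mono_left nhdsWithin_le_nhds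
    have hSz : inversionSymmetrization Φ n z = 0 := by simp [inversionSymmetrization, hz0, hn]
    rw [ContinuousWithinAt, hSz]
    exact squeeze_zero_norm' (eventually_mem_nhdsWithin.mono hbound) hlim
  · exact (hdiff (mem_unitStrip_of_norm_le_one
      (mem_closedBall_zero_iff.1 hz) hz0)).continuousAt.continuousWithinAt

theorem apply_one_eq_zero_of_conj_inv_eq (hΦ : DifferentiableOn ℂ Φ unitStrip) {M : ℝ}
    (hM : ∀ z ∈ unitStrip, ‖Φ z‖ ≤ M) {n : ℕ} (hn : n ≠ 0)
    (hsymm : ∀ r : ℝ, r ≠ 0 → conj (Φ (r⁻¹ : ℝ)) = |r| ^ n * Φ r) : Φ 1 = 0 := by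
  have hSI : inversionSymmetrization Φ n I = 0 := by simp [inversionSymmetrization, hn]
  have hreal : ∀ z ∈ frontier (ball (0 : ℂ) 1), (inversionSymmetrization Φ n z).im = 0 := by
    rw [frontier_ball 0 one_ne_zero]
    intro z hz
    rw [mem_sphere_zero_iff_norm] at hz
    by_cases hre : z.re = 0
    · have hz0 : 1 + z ^ 2 = 0 := by
        by_contra hz0
        have him : |z.im| < 1 := mem_unitStrip_of_norm_le_one hz.le hz0
        rw [abs_im_eq_norm.2 hre, hz] at him
        exact lt_irrefl 1 him
      simp [inversionSymmetrization, hz0, hn]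
    · exact inversionSymmetrization_im_eq_zero hΦ hsymm hz hre
  obtain ⟨c, hc⟩ := exists_eqOn_closure_const_of_frontier_im_eq_zero isBounded_ball isOpen_ball
    ((convex_ball (0 : ℂ) 1).isConnected (nonempty_ball.2 one_pos))
    (diffContOnCl_inversionSymmetrization hΦ hM hn) hreal
  rw [closure_ball 0 one_ne_zero] at hc
  have hS1 : inversionSymmetrization Φ n 1 = 0 :=
    (hc (by simp)).trans ((hc (by simp)).symm.trans hSI)
  have h2 : (1 + 1 ^ 2 : ℂ) ≠ 0 := by norm_num
  simpa [inversionSymmetrization, h2] using hS1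

end ComplexAnalysis

lemma ae_eq_zero_of_integral_inner_self_eq_zero {α E : Type*} [MeasurableSpace α] {μ : Measure α}
    [NormedAddCommGroup E] [InnerProductSpace ℂ E] {u : α → E}
    (hu : Integrable (fun a ↦ ‖u a‖ ^ 2) μ) (h : ∫ a, inner ℂ (u a) (u a) ∂μ = 0) :
    u =ᵐ[μ] 0 := by
  simp only [inner_self_eq_norm_sq_to_K, ← RCLike.ofReal_pow] at h
  rw [integral_ofReal, RCLike.ofReal_eq_zero,
    integral_eq_zero_iff_of_nonneg (fun a ↦ by positivity) hu] at h
  filter_upwards [h] with a ha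
  simpa using ha

section Fourier

open Complex FourierTransform ComplexConjugate RealInnerProductSpace

variable {V E : Type*} [NormedAddCommGroup V] [InnerProductSpace ℝ V] [FiniteDimensional ℝ V]
  [MeasurableSpace V] [BorelSpace V]

section Inversion

variable [NormedAddCommGroup E] [NormedSpace ℂ E] {f : V → E}

lemma integrable_norm_sq_fourierInv (hf : Integrable (𝓕⁻ f)) :
    Integrable (fun x ↦ ‖𝓕⁻ f x‖ ^ 2) := by
  have hbound (x : V) : ‖𝓕⁻ f x‖ ≤ ∫ y, ‖f y‖ :=
    VectorFourier.norm_fourierIntegral_le_integral_norm _ _ (-innerₗ V) f x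
  simpa only [sq] using hf.norm.bdd_mul hf.1.norm (.of_forall fun x ↦ by simpa using hbound x)

variable [CompleteSpace E]

lemma integral_fourier_smul_eq_integral_smul_fourier {φ : V → ℂ} (hφ : Integrable φ)
    (hf : Integrable f) : ∫ y, 𝓕 φ y • f y = ∫ x, φ x • 𝓕 f x := by
  simpa [Real.fourier_eq] using! VectorFourier.integral_fourierIntegral_smul_eq_flip (L := innerₗ V)
    Real.continuous_fourierChar continuous_inner hφ hf

lemma integral_fourierInv_smul_eq_integral_smul_fourierInv {φ : V → ℂ} (hφ : Integrable φ)
    (hf : Integrable f) : ∫ y, 𝓕⁻ φ y • f y = ∫ x, φ x • 𝓕⁻ f x := by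
  have hflip : (-innerₗ V).flip = -innerₗ V := by ext; simp [real_inner_comm]
  simpa [hflip] using! VectorFourier.integral_fourierIntegral_smul_eq_flip (L := -innerₗ V)
    Real.continuous_fourierChar continuous_inner.neg hφ hf

lemma fourierInv_fourier_ae_eq (hf : Integrable f) (hf' : Integrable (𝓕 f)) :
    𝓕⁻ (𝓕 f) =ᵐ[volume] f := by
  refine ae_eq_of_integral_contDiff_smul_eq ?_ hf.locallyIntegrable fun φ hφ hφc ↦ ?_
  · have hcont : Continuous (𝓕⁻ (𝓕 f)) := VectorFourier.fourierIntegral_continuous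
      Real.continuous_fourierChar continuous_inner.neg hf'
    exact hcont.locallyIntegrable
  have hφcc : HasCompactSupport (fun x ↦ (φ x : ℂ)) := hφc.comp_left ofReal_zero
  let ψ : SchwartzMap V ℂ := hφcc.toSchwartzMap (ofRealCLM.contDiff.comp hφ)
  calc ∫ x, φ x • 𝓕⁻ (𝓕 f) x = ∫ x, ψ x • 𝓕⁻ (𝓕 f) x := by simp only [← coe_smul]; rfl
    _ = ∫ y, (𝓕⁻ ψ) y • 𝓕 f y := by
      rw [← integral_fourierInv_smul_eq_integral_smul_fourierInv ψ.integrable hf',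
        SchwartzMap.fourierInv_coe]
    _ = ∫ x, (𝓕 (𝓕⁻ ψ)) x • f x := by
      rw [← integral_fourier_smul_eq_integral_smul_fourier (𝓕⁻ ψ).integrable hf,
        SchwartzMap.fourier_coe]
    _ = ∫ x, ψ x • f x := by rw [FourierTransform.fourier_fourierInv_eq]
    _ = ∫ x, φ x • f x := by simp only [← coe_smul]; rfl

end Inversion

variable [NormedAddCommGroup E] [InnerProductSpace ℂ E]

lemma conj_integral_inner_comp_inv_smul (u : V → E) {r : ℝ} (hr : r ≠ 0) :
    conj (∫ x, inner ℂ (u x) (u (r⁻¹ • x))) =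
      |r| ^ Module.finrank ℝ V * ∫ x, inner ℂ (u x) (u (r • x)) := by
  have hscale := Measure.integral_comp_smul volume (fun x ↦ inner ℂ (u (r⁻¹ • x)) (u x)) r
  simp only [smul_smul, inv_mul_cancel₀ hr, one_smul] at hscale
  rw [← integral_conj, hscale, abs_inv, abs_pow, real_smul]
  simp only [inner_conj_symm]
  push_cast
  rw [mul_inv_cancel_left₀ (pow_ne_zero _ (by simpa using hr))]

/-- The holomorphic continuation, wherever the integral converges, of the correlation
`r ↦ ∫ x, ⟪f x, 𝓕⁻ g (r • x)⟫` of `f` with the dilates of `𝓕⁻ g`. -/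
noncomputable def dilationCorrelation (f g : V → E) (z : ℂ) : ℂ :=
  ∫ p : V × V, cexp (I * z * (2 * Real.pi * ⟪p.1, p.2⟫ : ℝ)) * inner ℂ (f p.1) (g p.2)

variable {f g : V → E}

lemma differentiableOn_dilationCorrelation (hf : AEStronglyMeasurable f)
    (hg : AEStronglyMeasurable g)
    (h : Integrable fun p : V × V ↦ ‖f p.1‖ * ‖g p.2‖ * Real.exp |2 * Real.pi * ⟪p.1, p.2⟫|) :
    DifferentiableOn ℂ (dilationCorrelation f g) unitStrip :=
  differentiableOn_integral_cexp_mul (by fun_prop) (hf.comp_fst.inner hg.comp_snd)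
    (integrable_norm_inner_mul hf.comp_fst hg.comp_snd (by fun_prop) h)

lemma norm_dilationCorrelation_le (hf : AEStronglyMeasurable f) (hg : AEStronglyMeasurable g)
    (h : Integrable fun p : V × V ↦ ‖f p.1‖ * ‖g p.2‖ * Real.exp |2 * Real.pi * ⟪p.1, p.2⟫|)
    {z : ℂ} (hz : z ∈ unitStrip) :
    ‖dilationCorrelation f g z‖ ≤
      ∫ p : V × V, ‖inner ℂ (f p.1) (g p.2)‖ * Real.exp |2 * Real.pi * ⟪p.1, p.2⟫| :=
  norm_integral_cexp_mul_le (integrable_norm_inner_mul hf.comp_fst hg.comp_snd (by fun_prop) h) hz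

variable [CompleteSpace E]

lemma dilationCorrelation_ofReal (hf : Integrable f) (hg : Integrable g) (r : ℝ) :
    dilationCorrelation f g r = ∫ x, inner ℂ (f x) (𝓕⁻ g (r • x)) := by
  have hint : Integrable (fun p : V × V ↦
      cexp (I * r * (2 * Real.pi * ⟪p.1, p.2⟫ : ℝ)) * inner ℂ (f p.1) (g p.2)) := by
    refine (hf.norm.mul_prod hg.norm).mono'
      ((by fun_prop : Continuous _).aestronglyMeasurable.mul
        (hf.1.comp_fst.inner hg.1.comp_snd)) (.of_forall fun p ↦ ?_)
    have hunit : ‖cexp (I * r * (2 * Real.pi * ⟪p.1, p.2⟫ : ℝ))‖ = 1 := by simp [norm_exp]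
    rw [norm_mul, hunit, one_mul]
    exact norm_inner_le_norm _ _
  rw [dilationCorrelation, Measure.volume_eq_prod, integral_prod _ hint]
  congr! 2 with x
  have hinner : Integrable (fun y ↦ cexp ((2 * Real.pi * ⟪y, r • x⟫ : ℝ) * I) • g y) :=
    hg.norm.mono' ((by fun_prop : Continuous _).aestronglyMeasurable.smul hg.1)
      (.of_forall fun _ ↦ by rw [norm_smul, norm_exp_ofReal_mul_I, one_mul])
  rw [Real.fourierInv_eq', ← integral_inner hinner]
  congr! 2 with _
  rw [inner_smul_right, inner_smul_right, real_inner_comm]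
  push_cast
  ring_nf

variable [Nontrivial V]

theorem ae_eq_zero_of_integrable_norm_mul_norm_fourier_mul_exp (hf : Integrable f)
    (h : Integrable fun p : V × V ↦
      ‖f p.1‖ * ‖𝓕 f p.2‖ * Real.exp |2 * Real.pi * ⟪p.1, p.2⟫|) : f =ᵐ[volume] 0 := by
  by_contra hne
  have hgm : AEStronglyMeasurable (𝓕 f) :=
    (VectorFourier.fourierIntegral_continuous Real.continuous_fourierChar (L := innerₗ V)
      continuous_inner hf).aestronglyMeasurable
  have hg : Integrable (𝓕 f) := integrable_of_integrable_norm_mul_norm_mul hne hgm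
    (fun _ ↦ Real.one_le_exp (abs_nonneg _)) h
  have hinv := fourierInv_fourier_ae_eq hf hg
  have hcorr (r : ℝ) : dilationCorrelation f (𝓕 f) r =
      ∫ x, inner ℂ (𝓕⁻ (𝓕 f) x) (𝓕⁻ (𝓕 f) (r • x)) := by
    rw [dilationCorrelation_ofReal hf hg]
    refine integral_congr_ae ?_
    filter_upwards [hinv] with x hx
    rw [hx]
  have hone : dilationCorrelation f (𝓕 f) 1 = 0 :=
    apply_one_eq_zero_of_conj_inv_eq (differentiableOn_dilationCorrelation hf.1 hgm h)
      (fun z hz ↦ norm_dilationCorrelation_le hf.1 hgm h hz) Module.finrank_pos.ne'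
      fun r hr ↦ by rw [hcorr, hcorr, conj_integral_inner_comp_inv_smul _ hr]
  have hsq := integrable_norm_sq_fourierInv (hf.congr hinv.symm)
  have hnorm : ∫ x, inner ℂ (𝓕⁻ (𝓕 f) x) (𝓕⁻ (𝓕 f) x) = 0 := by
    simpa [hone] using (hcorr 1).symm
  exact hne (hinv.symm.trans (ae_eq_zero_of_integral_inner_self_eq_zero hsq hnorm))

theorem beurling_theorem_R_general (hf : Integrable f) (F : V → E)
    (hF : ∀ y, F y = ∫ x, cexp (-(I * ⟪y, x⟫)) • f x)
    (h : Integrable fun p : V × V ↦ ‖f p.1‖ * ‖F p.2‖ * Real.exp |⟪p.1, p.2⟫|) :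
    f =ᵐ[volume] 0 := by
  have hfourier (y : V) : 𝓕 f y = F ((2 * Real.pi) • y) := by
    rw [Real.fourier_eq', hF]
    congr! 3 with x
    rw [real_inner_smul_left, real_inner_comm]
    push_cast
    ring_nf
  refine ae_eq_zero_of_integrable_norm_mul_norm_fourier_mul_exp hf ?_
  simp only [hfourier, ← real_inner_smul_right]
  exact integrable_comp_smul_snd h Real.two_pi_pos.ne'

end Fourier

theorem beurling_theorem_R (f : ℝ → ℂ) (hf : Integrable f)
    (F : ℝ → ℂ)
    (hF : ∀ y : ℝ, F y = ∫ t : ℝ, f t * Complex.exp (-(Complex.I * y * t)))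
    (h : Integrable (fun p : ℝ × ℝ => ‖f p.1‖ * ‖F p.2‖ * Real.exp |p.1 * p.2|)) :
    f =ᵐ[volume] 0 :=
  beurling_theorem_R_general hf F (fun y ↦ by simp [hF, mul_comm, mul_left_comm])
    (by simpa [mul_comm] using h)
end

section
/- Let f ∈ L¹(ℝ), α, β > 0 with αβ > 1/4, and suppose |f(x)| ≤ C e^{-αx²} and |f̃(λ)| ≤ C e^{-βλ²} for all x, λ ∈ ℝ. Then f = 0 almost everywhere. -/
open MeasureTheory

/-!
A Gaussian bound `‖f t‖ ≤ A e^{-αt²}` makes the Fourier transform of `f` extend to an entire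
function `F` with `‖F z‖ = O(e^{a (im z)²})`, where `a = 1 / (4α) < β`. Pick `a < γ < β`. Then
`H z = e^{γz²} F z` is bounded on the real axis, and in the steep sectors around the imaginary axis
where `γ (re z)² ≤ (γ - a) (im z)²`. Each of the four remaining sectors has opening less than `π/2`,
the critical angle for functions of order two, so Phragmén–Lindelöf bounds `H` there as well. By
Liouville `H` is constant; since it decays along the real axis, `H = 0`, so `F = 0`, and `f = 0` by
injectivity of the Fourier transform.
-/

open Complex Set Filter Topology FourierTransform ContDiff

variable {E : Type*} [NormedAddCommGroup E] [NormedSpace ℂ E]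

section PhragmenLindelof

theorem norm_le_of_arg_mem_Icc_of_growth {f : ℂ → E} (hf : DifferentiableOn ℂ f {0}ᶜ)
    {a b c A B M : ℝ} (ha : -Real.pi < a) (hb : b ≤ Real.pi) (hc₀ : 0 ≤ c)
    (hc : c < Real.pi / (b - a))
    (hgrowth : ∀ z, arg z ∈ Ioo a b → ‖f z‖ ≤ A * Real.exp (B * ‖z‖ ^ c))
    (hfa : ∀ z, arg z = a → ‖f z‖ ≤ M) (hfb : ∀ z, arg z = b → ‖f z‖ ≤ M)
    {z : ℂ} (hz₀ : z ≠ 0) (hz : arg z ∈ Icc a b) : ‖f z‖ ≤ M := by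
  have arg_exp {w : ℂ} (hw : w.im ∈ Icc a b) : arg (exp w) = w.im := by
    rw [← log_im, log_exp (ha.trans_le hw.1) (hw.2.trans hb)]
  have hab : a ≤ b := hz.1.trans hz.2
  rw [← log_im] at hz
  rw [← exp_log hz₀]
  refine PhragmenLindelof.horizontal_strip (f := fun w ↦ f (exp w)) ?_ ⟨c, hc, |B|, ?_⟩
    (fun w hw ↦ hfa _ ?_) (fun w hw ↦ hfb _ ?_) hz.1 hz.2
  · exact (hf.comp differentiable_exp.differentiableOn fun w _ ↦ exp_ne_zero w).diffContOnCl
  · refine .of_bound |A| (eventually_inf_principal.2 (.of_forall fun w hw ↦ ?_))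
    have hpow : ‖exp w‖ ^ c ≤ Real.exp (c * |w.re|) := by
      rw [norm_exp, ← Real.exp_mul, mul_comm]
      gcongr
      exact le_abs_self _
    rw [Real.norm_of_nonneg (Real.exp_nonneg _)]
    refine (hgrowth _ (by rwa [arg_exp (Ioo_subset_Icc_self hw)])).trans ?_
    gcongr ?_ * Real.exp (?_ * ?_)
    exacts [le_abs_self A, le_abs_self B]
  · rw [arg_exp (by rw [hw]; exact left_mem_Icc.2 hab), hw]
  · rw [arg_exp (by rw [hw]; exact right_mem_Icc.2 hab), hw]

theorem norm_le_of_abs_arg_le_of_growth {f : ℂ → E} (hf : DifferentiableOn ℂ f {0}ᶜ)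
    {θ c A B M : ℝ} (hθ₀ : 0 < θ) (hθ₁ : θ < Real.pi) (hc₀ : 0 ≤ c) (hc : c < Real.pi / θ)
    (hgrowth : ∀ z, |arg z| < θ → ‖f z‖ ≤ A * Real.exp (B * ‖z‖ ^ c))
    (hreal : ∀ z, arg z = 0 → ‖f z‖ ≤ M) (hray : ∀ z, |arg z| = θ → ‖f z‖ ≤ M)
    {z : ℂ} (hz : |arg z| ≤ θ) : ‖f z‖ ≤ M := by
  obtain ⟨hneg_le, hle⟩ := abs_le.1 hz
  rcases eq_or_ne z 0 with rfl | hz₀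
  · exact hreal 0 arg_zero
  rcases le_total 0 (arg z) with harg | harg
  · exact norm_le_of_arg_mem_Icc_of_growth hf (by linarith) hθ₁.le hc₀ (by simpa using hc)
      (fun w hw ↦ hgrowth w (abs_lt.2 ⟨by linarith [hw.1], hw.2⟩)) hreal
      (fun w hw ↦ hray w (by rw [hw, abs_of_pos hθ₀])) hz₀ ⟨harg, hle⟩
  · exact norm_le_of_arg_mem_Icc_of_growth hf (by linarith) (by linarith) hc₀ (by simpa using hc)
      (fun w hw ↦ hgrowth w (abs_lt.2 ⟨hw.1, by linarith [hw.2]⟩))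
      (fun w hw ↦ hray w (by rw [hw, abs_neg, abs_of_pos hθ₀])) hreal hz₀ ⟨hneg_le, harg⟩

theorem exists_cos_sq_eq {s : ℝ} (hs₀ : 0 < s) (hs₁ : s < 1) :
    ∃ θ ∈ Ioo 0 (Real.pi / 2), Real.cos θ ^ 2 = s := by
  have hsqrt₁ : √s < 1 := (Real.sqrt_lt' one_pos).2 (by simpa using hs₁)
  refine ⟨Real.arccos √s, ⟨Real.arccos_pos.2 hsqrt₁,
    Real.arccos_lt_pi_div_two.2 (Real.sqrt_pos.2 hs₀)⟩, ?_⟩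
  rw [Real.cos_arccos (by linarith [Real.sqrt_nonneg s]) hsqrt₁.le, Real.sq_sqrt hs₀.le]

theorem re_sq_le_norm_sq_mul_cos_sq {θ : ℝ} (hθ : 0 ≤ θ) {z : ℂ} (hz : 0 ≤ z.re)
    (hθz : θ ≤ |arg z|) : z.re ^ 2 ≤ ‖z‖ ^ 2 * Real.cos θ ^ 2 := by
  have hre : z.re ≤ ‖z‖ * Real.cos θ := by
    rw [← norm_mul_cos_arg, ← Real.cos_abs (arg z)]
    gcongr
    exact Real.cos_le_cos_of_nonneg_of_le_pi hθ (abs_arg_le_pi z) hθz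
  rw [← mul_pow]
  gcongr

section QuadraticGrowth

variable {f : ℂ → E} {γ δ M : ℝ}

theorem norm_le_of_norm_le_exp_re_sq_sub_im_sq_of_re_nonneg (hf : Differentiable ℂ f)
    (hγ : 0 < γ) (hδ : 0 < δ) (hgrowth : ∀ z, ‖f z‖ ≤ M * Real.exp (γ * z.re ^ 2 - δ * z.im ^ 2))
    (hreal : ∀ x : ℝ, ‖f x‖ ≤ M) {z : ℂ} (hz : 0 ≤ z.re) : ‖f z‖ ≤ M := by
  have hM : 0 ≤ M := (norm_nonneg _).trans (hreal 0)
  have norm_sq (w : ℂ) : ‖w‖ ^ 2 = w.re ^ 2 + w.im ^ 2 := by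
    rw [Complex.sq_norm, normSq_apply, sq, sq]
  obtain ⟨θ, ⟨hθ₀, hθ₁⟩, hcos⟩ : ∃ θ ∈ Ioo 0 (Real.pi / 2), Real.cos θ ^ 2 = δ / (γ + δ) :=
    exists_cos_sq_eq (by positivity) ((div_lt_one (by positivity)).2 (by linarith))
  have hsteep {w : ℂ} (hw : 0 ≤ w.re) (hθw : θ ≤ |arg w|) : ‖f w‖ ≤ M := by
    have hre := re_sq_le_norm_sq_mul_cos_sq hθ₀.le hw hθw
    rw [hcos, mul_div_assoc', le_div_iff₀ (by positivity), norm_sq] at hre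
    refine (hgrowth w).trans (mul_le_of_le_one_right hM (Real.exp_le_one_iff.2 ?_))
    linarith
  have hpos (w : ℂ) (hw : arg w = 0) : ‖f w‖ ≤ M := by
    rw [← conj_eq_iff_re.1 (conj_eq_iff_im.2 (arg_eq_zero_iff.1 hw).2)]
    exact hreal _
  have horder (w : ℂ) : ‖f w‖ ≤ M * Real.exp (γ * ‖w‖ ^ (2 : ℝ)) := by
    refine (hgrowth w).trans ?_
    rw [Real.rpow_two, norm_sq]
    gcongr
    nlinarith [sq_nonneg w.im]
  have hangle : 2 < Real.pi / θ := by rw [lt_div_iff₀ hθ₀]; linarith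
  rcases le_total θ |arg z| with hθz | hθz
  · exact hsteep hz hθz
  · exact norm_le_of_abs_arg_le_of_growth hf.differentiableOn hθ₀ (by linarith) zero_le_two hangle
      (fun w _ ↦ horder w) hpos
      (fun w hw ↦ hsteep (abs_arg_le_pi_div_two_iff.1 (hw.trans_le hθ₁.le)) hw.ge) hθz

theorem norm_le_of_norm_le_exp_re_sq_sub_im_sq (hf : Differentiable ℂ f)
    (hγ : 0 < γ) (hδ : 0 < δ) (hgrowth : ∀ z, ‖f z‖ ≤ M * Real.exp (γ * z.re ^ 2 - δ * z.im ^ 2))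
    (hreal : ∀ x : ℝ, ‖f x‖ ≤ M) (z : ℂ) : ‖f z‖ ≤ M := by
  rcases le_total 0 z.re with hz | hz
  · exact norm_le_of_norm_le_exp_re_sq_sub_im_sq_of_re_nonneg hf hγ hδ hgrowth hreal hz
  · have hneg := norm_le_of_norm_le_exp_re_sq_sub_im_sq_of_re_nonneg (f := fun w ↦ f (-w))
      (hf.comp differentiable_neg) hγ hδ (fun w ↦ by simpa using hgrowth (-w))
      (fun x ↦ by simpa using hreal (-x)) (z := -z) (by simpa using hz)
    simpa using hneg

end QuadraticGrowth

theorem norm_exp_ofReal_mul_sq (γ : ℝ) (z : ℂ) :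
    ‖exp (γ * z ^ 2)‖ = Real.exp (γ * (z.re ^ 2 - z.im ^ 2)) := by
  rw [norm_exp, re_ofReal_mul, sq z, mul_re, sq, sq]

theorem norm_exp_ofReal_mul_sq_smul_le {v : E} {M s : ℝ} (hv : ‖v‖ ≤ M * Real.exp s)
    (γ : ℝ) (z : ℂ) :
    ‖exp (γ * z ^ 2) • v‖ ≤ M * Real.exp (γ * (z.re ^ 2 - z.im ^ 2) + s) := by
  rw [norm_smul, norm_exp_ofReal_mul_sq, Real.exp_add, mul_left_comm]
  gcongr

theorem tendsto_exp_neg_mul_sq_atTop {b : ℝ} (hb : 0 < b) :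
    Tendsto (fun x : ℝ ↦ Real.exp (-(b * x ^ 2))) atTop (𝓝 0) :=
  Real.tendsto_exp_neg_atTop_nhds_zero.comp ((tendsto_pow_atTop two_ne_zero).const_mul_atTop hb)

theorem eq_zero_of_norm_le_exp_im_sq_of_norm_le_exp_neg_sq {F : ℂ → E} (hF : Differentiable ℂ F)
    {a b A B : ℝ} (ha : 0 ≤ a) (hab : a < b) (hgrowth : ∀ z, ‖F z‖ ≤ A * Real.exp (a * z.im ^ 2))
    (hdecay : ∀ x : ℝ, ‖F x‖ ≤ B * Real.exp (-(b * x ^ 2))) : F = 0 := by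
  obtain ⟨γ, haγ, hγb⟩ := exists_between hab
  set M := max A B
  have hM : 0 ≤ M := le_max_of_le_left (by simpa using (norm_nonneg _).trans (hgrowth 0))
  set H : ℂ → E := fun z ↦ exp (γ * z ^ 2) • F z
  have hH : Differentiable ℂ H := Differentiable.fun_smul (by fun_prop) hF
  have hHgrowth (z : ℂ) : ‖H z‖ ≤ M * Real.exp (γ * z.re ^ 2 - (γ - a) * z.im ^ 2) := by
    have hFM : ‖F z‖ ≤ M * Real.exp (a * z.im ^ 2) :=
      (hgrowth z).trans (by gcongr; exact le_max_left A B)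
    convert! norm_exp_ofReal_mul_sq_smul_le hFM γ z using 3
    ring
  have hHdecay (x : ℝ) : ‖H x‖ ≤ M * Real.exp (-((b - γ) * x ^ 2)) := by
    have hFM : ‖F x‖ ≤ M * Real.exp (-(b * x ^ 2)) :=
      (hdecay x).trans (by gcongr; exact le_max_right A B)
    convert! norm_exp_ofReal_mul_sq_smul_le hFM γ x using 3
    rw [ofReal_re, ofReal_im]
    ring
  have hHreal (x : ℝ) : ‖H x‖ ≤ M := by
    refine (hHdecay x).trans (mul_le_of_le_one_right hM (Real.exp_le_one_iff.2 ?_))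
    exact neg_nonpos.2 (mul_nonneg (sub_nonneg.2 hγb.le) (sq_nonneg x))
  have hbounded : Bornology.IsBounded (range H) :=
    isBounded_iff_forall_norm_le.2 ⟨M, forall_mem_range.2 <|
      norm_le_of_norm_le_exp_re_sq_sub_im_sq hH (ha.trans_lt haγ) (sub_pos.2 haγ) hHgrowth hHreal⟩
  have hlim : Tendsto (fun x : ℝ ↦ M * Real.exp (-((b - γ) * x ^ 2))) atTop (𝓝 0) := by
    simpa using (tendsto_exp_neg_mul_sq_atTop (sub_pos.2 hγb)).const_mul M
  funext z
  have hHz : ‖H z‖ ≤ 0 := ge_of_tendsto' hlim fun x ↦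
    hH.apply_eq_apply_of_bounded hbounded z x ▸ hHdecay x
  exact (smul_eq_zero_iff_right (exp_ne_zero _)).1 (norm_le_zero_iff.1 hHz)

end PhragmenLindelof

section GaussianIntegrals

variable {α : ℝ}

theorem exp_mul_mul_exp_neg_mul_sq (hα : α ≠ 0) (y t : ℝ) :
    Real.exp (y * t) * Real.exp (-(α * t ^ 2)) =
      Real.exp (1 / (4 * α) * y ^ 2) * Real.exp (-α * (t - y / (2 * α)) ^ 2) := by
  rw [← Real.exp_add, ← Real.exp_add]
  congr 1
  field_simp
  ring

theorem integrable_exp_mul_mul_exp_neg_mul_sq (hα : 0 < α) (y : ℝ) :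
    Integrable fun t : ℝ ↦ Real.exp (y * t) * Real.exp (-(α * t ^ 2)) := by
  simp_rw [exp_mul_mul_exp_neg_mul_sq hα.ne']
  exact ((integrable_exp_neg_mul_sq hα).comp_sub_right _).const_mul _

theorem integral_exp_mul_mul_exp_neg_mul_sq (hα : α ≠ 0) (y : ℝ) :
    ∫ t : ℝ, Real.exp (y * t) * Real.exp (-(α * t ^ 2)) =
      √(Real.pi / α) * Real.exp (1 / (4 * α) * y ^ 2) := by
  simp_rw [exp_mul_mul_exp_neg_mul_sq hα]
  rw [integral_const_mul, integral_sub_right_eq_self (fun t : ℝ ↦ Real.exp (-α * t ^ 2)),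
    integral_gaussian, mul_comm]

end GaussianIntegrals

section FourierLaplace

/-- The Fourier–Laplace transform `z ↦ ∫ e^{-izt} f(t) dt`: the extension to complex frequencies of
the Fourier transform, in the angular-frequency convention (no `2π` in the exponent, unlike `𝓕`). -/
noncomputable def fourierLaplace (f : ℝ → E) (z : ℂ) : E :=
  ∫ t : ℝ, exp (-(I * z * t)) • f t

variable {f : ℝ → E}

theorem norm_exp_neg_I_mul_mul_ofReal (z : ℂ) (t : ℝ) :
    ‖exp (-(I * z * t))‖ = Real.exp (z.im * t) := by
  simp [norm_exp]

theorem fourier_eq_fourierLaplace (f : ℝ → E) (w : ℝ) :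
    𝓕 f w = fourierLaplace f (2 * Real.pi * w) := by
  rw [Real.fourier_real_eq_integral_exp_smul]
  refine integral_congr_ae (.of_forall fun t ↦ ?_)
  dsimp only
  congr 2
  push_cast
  ring

theorem norm_fourierLaplace_le (f : ℝ → E) (z : ℂ) :
    ‖fourierLaplace f z‖ ≤ ∫ t : ℝ, Real.exp (z.im * t) * ‖f t‖ := by
  simpa only [norm_smul, norm_exp_neg_I_mul_mul_ofReal, fourierLaplace] using
    norm_integral_le_integral_norm fun t : ℝ ↦ exp (-(I * z * t)) • f t

theorem hasDerivAt_exp_neg_I_mul_mul (z s : ℂ) :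
    HasDerivAt (fun w ↦ exp (-(I * w * s))) (exp (-(I * z * s)) * -(I * s)) z := by
  simpa using (((hasDerivAt_id z).const_mul I).mul_const s).fun_neg.cexp

theorem norm_deriv_exp_neg_I_mul_mul_ofReal_le {z w : ℂ} (hw : w ∈ Metric.ball z 1) (t : ℝ) :
    ‖exp (-(I * w * t)) * -(I * t)‖ ≤
      Real.exp ((z.im + 2) * t) + Real.exp ((z.im - 2) * t) := by
  have him : w.im * t ≤ z.im * t + |t| := by
    have hdiff : |w.im - z.im| ≤ 1 := by
      simpa using (abs_im_le_norm (w - z)).trans (mem_ball_iff_norm.1 hw).le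
    have hmul : (w.im - z.im) * t ≤ |t| := by
      refine (le_abs_self _).trans ?_
      rw [abs_mul]
      exact mul_le_of_le_one_left (abs_nonneg t) hdiff
    linarith
  calc ‖exp (-(I * w * t)) * -(I * t)‖ = Real.exp (w.im * t) * |t| := by
        rw [norm_mul, norm_exp_neg_I_mul_mul_ofReal]; simp
    _ ≤ Real.exp (z.im * t + |t|) * Real.exp |t| := by
        gcongr; linarith [Real.add_one_le_exp |t|]
    _ = Real.exp (z.im * t) * Real.exp |2 * t| := by
        rw [← Real.exp_add, ← Real.exp_add, abs_mul, abs_two]; ring_nf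
    _ ≤ Real.exp (z.im * t) * (Real.exp (2 * t) + Real.exp (-(2 * t))) := by
        gcongr; exact Real.exp_abs_le _
    _ = Real.exp ((z.im + 2) * t) + Real.exp ((z.im - 2) * t) := by
        rw [mul_add, ← Real.exp_add, ← Real.exp_add]; ring_nf

theorem differentiable_fourierLaplace
    (hf : ∀ y : ℝ, Integrable fun t : ℝ ↦ Real.exp (y * t) • f t) :
    Differentiable ℂ (fourierLaplace f) := by
  intro z
  have hmeas : AEStronglyMeasurable f := by simpa using (hf 0).aestronglyMeasurable
  have hkernel (w : ℂ) : AEStronglyMeasurable fun t : ℝ ↦ exp (-(I * w * t)) • f t :=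
    AEStronglyMeasurable.smul (by fun_prop) hmeas
  refine (hasDerivAt_integral_of_dominated_loc_of_deriv_le (μ := volume)
    (F := fun (w : ℂ) (t : ℝ) ↦ exp (-(I * w * t)) • f t)
    (F' := fun (w : ℂ) (t : ℝ) ↦ (exp (-(I * w * t)) * -(I * t)) • f t)
    (bound := fun t ↦
      ‖Real.exp ((z.im + 2) * t) • f t‖ + ‖Real.exp ((z.im - 2) * t) • f t‖)
    (Metric.ball_mem_nhds z one_pos) (.of_forall hkernel) ?_ ?_ (.of_forall fun t w hw ↦ ?_)
    ((hf _).norm.add (hf _).norm) (.of_forall fun t w _ ↦ ?_)).2.differentiableAt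
  · refine (hf z.im).mono (hkernel z) (.of_forall fun t ↦ ?_)
    rw [norm_smul, norm_smul, norm_exp_neg_I_mul_mul_ofReal, Real.norm_of_nonneg (by positivity)]
  · exact AEStronglyMeasurable.smul (by fun_prop) hmeas
  · simp only [norm_smul, Real.norm_eq_abs, Real.abs_exp, ← add_mul]
    gcongr
    simpa only [norm_smul] using norm_deriv_exp_neg_I_mul_mul_ofReal_le hw t
  · exact (hasDerivAt_exp_neg_I_mul_mul w t).smul_const (f t)

section GaussianDecay

variable {α A : ℝ}

theorem integrable_exp_mul_smul_of_norm_le_gaussian (hα : 0 < α) (hf : AEStronglyMeasurable f)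
    (hdecay : ∀ᵐ t : ℝ, ‖f t‖ ≤ A * Real.exp (-(α * t ^ 2))) (y : ℝ) :
    Integrable fun t : ℝ ↦ Real.exp (y * t) • f t := by
  have hexp : Continuous fun t : ℝ ↦ Real.exp (y * t) := by fun_prop
  refine ((integrable_exp_mul_mul_exp_neg_mul_sq hα y).const_mul A).mono'
    (hexp.aestronglyMeasurable.smul hf) ?_
  filter_upwards [hdecay] with t ht
  rw [norm_smul, Real.norm_of_nonneg (by positivity), mul_left_comm]
  gcongr

theorem norm_fourierLaplace_le_of_norm_le_gaussian (hα : 0 < α)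
    (hdecay : ∀ᵐ t : ℝ, ‖f t‖ ≤ A * Real.exp (-(α * t ^ 2))) (z : ℂ) :
    ‖fourierLaplace f z‖ ≤ A * √(Real.pi / α) * Real.exp (1 / (4 * α) * z.im ^ 2) :=
  calc ‖fourierLaplace f z‖ ≤ ∫ t : ℝ, Real.exp (z.im * t) * ‖f t‖ := norm_fourierLaplace_le f z
    _ ≤ ∫ t : ℝ, A * (Real.exp (z.im * t) * Real.exp (-(α * t ^ 2))) := by
        refine integral_mono_of_nonneg (.of_forall fun t ↦ by positivity)
          ((integrable_exp_mul_mul_exp_neg_mul_sq hα z.im).const_mul A) ?_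
        filter_upwards [hdecay] with t ht
        rw [mul_left_comm]
        gcongr
    _ = A * √(Real.pi / α) * Real.exp (1 / (4 * α) * z.im ^ 2) := by
        rw [integral_const_mul, integral_exp_mul_mul_exp_neg_mul_sq hα.ne', mul_assoc]

end GaussianDecay

end FourierLaplace

theorem ae_eq_zero_of_fourier_eq_zero [CompleteSpace E] {V : Type*} [NormedAddCommGroup V]
    [InnerProductSpace ℝ V] [FiniteDimensional ℝ V] [MeasurableSpace V] [BorelSpace V]
    {f : V → E} (hf : Integrable f) (h : 𝓕 f = 0) : f =ᵐ[volume] 0 := by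
  refine ae_eq_zero_of_integral_contDiff_smul_eq_zero hf.locallyIntegrable fun g hg hgs ↦ ?_
  have hgs' : HasCompactSupport fun x ↦ (g x : ℂ) := hgs.comp_left ofReal_zero
  set G : SchwartzMap V ℂ := hgs'.toSchwartzMap (ofRealCLM.contDiff.comp hg)
  set K : SchwartzMap V ℂ := 𝓕⁻ G
  have hK : 𝓕 (⇑K) = G := by
    rw [← SchwartzMap.fourier_coe, FourierTransform.fourier_fourierInv_eq]
  calc ∫ x, g x • f x = ∫ x, 𝓕 (⇑K) x • f x := by rw [hK]; rfl
    _ = ∫ x, K x • 𝓕 f x := by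
        simpa only [flip_innerₗ] using! VectorFourier.integral_fourierIntegral_smul_eq_flip
          (L := innerₗ V) Real.continuous_fourierChar continuous_inner K.integrable hf
    _ = 0 := by simp [h]

theorem hardy_theorem_R_general [CompleteSpace E] {f : ℝ → E} (hf : AEStronglyMeasurable f)
    {α β A B : ℝ} (hα : 0 < α) (hαβ : 1 / 4 < α * β)
    (hfd : ∀ᵐ x : ℝ, ‖f x‖ ≤ A * Real.exp (-(α * x ^ 2)))
    (hFd : ∀ l : ℝ, ‖fourierLaplace f l‖ ≤ B * Real.exp (-(β * l ^ 2))) :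
    f =ᵐ[volume] 0 := by
  have hint := integrable_exp_mul_smul_of_norm_le_gaussian hα hf hfd
  have hlt : 1 / (4 * α) < β := by
    rw [div_lt_iff₀ (by positivity)]
    linarith
  have hzero : fourierLaplace f = 0 :=
    eq_zero_of_norm_le_exp_im_sq_of_norm_le_exp_neg_sq (differentiable_fourierLaplace hint)
      (by positivity) hlt (norm_fourierLaplace_le_of_norm_le_gaussian hα hfd) hFd
  refine ae_eq_zero_of_fourier_eq_zero (by simpa using hint 0) (funext fun w ↦ ?_)
  rw [fourier_eq_fourierLaplace, hzero, Pi.zero_apply, Pi.zero_apply]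

theorem hardy_theorem_R (f : ℝ → ℂ) (hf : Integrable f)
    (F : ℝ → ℂ)
    (hF : ∀ l : ℝ, F l = ∫ t : ℝ, f t * Complex.exp (-(Complex.I * l * t)))
    (α β C : ℝ) (hα : 0 < α) (hβ : 0 < β) (hαβ : 1 / 4 < α * β)
    (hfd : ∀ x : ℝ, ‖f x‖ ≤ C * Real.exp (-(α * x ^ 2)))
    (hFd : ∀ l : ℝ, ‖F l‖ ≤ C * Real.exp (-(β * l ^ 2))) :
    f =ᵐ[volume] 0 :=
  hardy_theorem_R_general hf.aestronglyMeasurable hα hαβ (.of_forall hfd) fun l ↦ by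
    simpa only [fourierLaplace, smul_eq_mul, mul_comm, hF] using hFd l
end
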